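/- Fix H ∈ (0,1) and c > 0, and let φ_c be the localisation function. Then for every real x ≠ 0, ∫₀¹ |s·x|^{2H}·φ_c(s·x)·(1 − s) ds ≤ (1 + 1/(2 − 2H))·c^{1 + 1/(2H)}·|x|^{−1}. -/

import Mathlib

/-- The localisation function `φ_c(x) = min(1, c^{3/(2H)} |x|^{-3})`, with the convention
`φ_c(0) = 1`. -/
noncomputable def locFun (H c : ℝ) (x : ℝ) : ℝ :=
  if x = 0 then 1 else min 1 (c ^ ((3 : ℝ) / (2 * H)) * |x| ^ (-3 : ℝ))

/-!
With `a = c ^ (1 / (2H))`, the integrand at `s` is `f (s|x|) * (1 - s)`, where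
`f t = t ^ (2H) * min 1 ((a / t) ^ 3)`. Bounding the weight `1 - s` by `1`, rescaling and enlarging
the domain leaves `|x|⁻¹ * ∫ t in (0, ∞), f t`. This last integral is explicit: `f` is a pure power
on each side of `t = a`, and the two sides contribute `1 / (1 + 2H)` and `1 / (2 - 2H)` times
`a ^ (1 + 2H)`. For `H > 0` the first constant is at most `1`.
-/

open MeasureTheory Set

section TruncatedPower

variable {a p q : ℝ}

lemma rpow_mul_min_one_div_rpow_of_le {t : ℝ} (ht : 0 < t) (hta : t ≤ a) (hq : 0 ≤ q) :
    t ^ p * min 1 ((a / t) ^ q) = t ^ p := by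
  rw [min_eq_left (Real.one_le_rpow ((one_le_div ht).mpr hta) hq), mul_one]

lemma rpow_mul_min_one_div_rpow_of_ge {t : ℝ} (ha : 0 ≤ a) (ht : 0 < t) (hat : a ≤ t)
    (hq : 0 ≤ q) : t ^ p * min 1 ((a / t) ^ q) = a ^ q * t ^ (p - q) := by
  rw [min_eq_right (Real.rpow_le_one (by positivity) ((div_le_one ht).mpr hat) hq),
    Real.div_rpow ha ht.le, Real.rpow_sub ht]
  ring

lemma eqOn_Ioc_rpow_mul_min_one_div_rpow (hq : 0 ≤ q) :
    EqOn (fun t ↦ t ^ p * min 1 ((a / t) ^ q)) (fun t ↦ t ^ p) (Ioc 0 a) :=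
  fun _ ht ↦ rpow_mul_min_one_div_rpow_of_le ht.1 ht.2 hq

lemma eqOn_Ioi_rpow_mul_min_one_div_rpow (ha : 0 ≤ a) (hq : 0 ≤ q) :
    EqOn (fun t ↦ t ^ p * min 1 ((a / t) ^ q)) (fun t ↦ a ^ q * t ^ (p - q)) (Ioi a) :=
  fun _ ht ↦ rpow_mul_min_one_div_rpow_of_ge ha (ha.trans_lt ht) (le_of_lt ht) hq

lemma integrableOn_Ioc_rpow_mul_min_one_div_rpow (ha : 0 ≤ a) (hp : -1 < p) (hq : 0 ≤ q) :
    IntegrableOn (fun t ↦ t ^ p * min 1 ((a / t) ^ q)) (Ioc 0 a) :=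
  ((intervalIntegrable_iff_integrableOn_Ioc_of_le ha).mp
    (intervalIntegral.intervalIntegrable_rpow' hp)).congr_fun
      (eqOn_Ioc_rpow_mul_min_one_div_rpow hq).symm measurableSet_Ioc

lemma integrableOn_Ioi_rpow_mul_min_one_div_rpow (ha : 0 < a) (hq : 0 ≤ q) (hpq : p + 1 < q) :
    IntegrableOn (fun t ↦ t ^ p * min 1 ((a / t) ^ q)) (Ioi a) :=
  IntegrableOn.congr_fun ((integrableOn_Ioi_rpow_of_lt (by linarith) ha).const_mul _)
    (eqOn_Ioi_rpow_mul_min_one_div_rpow ha.le hq).symm measurableSet_Ioi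

lemma integrableOn_Ioi_zero_rpow_mul_min_one_div_rpow (ha : 0 < a) (hp : -1 < p)
    (hpq : p + 1 < q) : IntegrableOn (fun t ↦ t ^ p * min 1 ((a / t) ^ q)) (Ioi 0) := by
  have hq : 0 ≤ q := by linarith
  rw [← Ioc_union_Ioi_eq_Ioi ha.le]
  exact (integrableOn_Ioc_rpow_mul_min_one_div_rpow ha.le hp hq).union
    (integrableOn_Ioi_rpow_mul_min_one_div_rpow ha hq hpq)

lemma integral_Ioc_rpow_mul_min_one_div_rpow (ha : 0 ≤ a) (hp : -1 < p) (hq : 0 ≤ q) :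
    ∫ t in Ioc 0 a, t ^ p * min 1 ((a / t) ^ q) = 1 / (p + 1) * a ^ (p + 1) := by
  have hp' : p + 1 ≠ 0 := by linarith
  rw [setIntegral_congr_fun measurableSet_Ioc (eqOn_Ioc_rpow_mul_min_one_div_rpow hq),
    ← intervalIntegral.integral_of_le ha, integral_rpow (Or.inl hp), Real.zero_rpow hp']
  ring

lemma integral_Ioi_rpow_mul_min_one_div_rpow (ha : 0 < a) (hq : 0 ≤ q) (hpq : p + 1 < q) :
    ∫ t in Ioi a, t ^ p * min 1 ((a / t) ^ q) = 1 / (q - p - 1) * a ^ (p + 1) := by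
  have hpow : a ^ q * a ^ (p - q + 1) = a ^ (p + 1) := by
    rw [← Real.rpow_add ha]
    ring_nf
  rw [setIntegral_congr_fun measurableSet_Ioi (eqOn_Ioi_rpow_mul_min_one_div_rpow ha.le hq),
    integral_const_mul, integral_Ioi_rpow_of_lt (by linarith) ha, ← hpow,
    show p - q + 1 = -(q - p - 1) by ring, neg_div_neg_eq]
  ring

theorem integral_Ioi_zero_rpow_mul_min_one_div_rpow (ha : 0 < a) (hp : -1 < p)
    (hpq : p + 1 < q) :
    ∫ t in Ioi 0, t ^ p * min 1 ((a / t) ^ q) = (1 / (p + 1) + 1 / (q - p - 1)) * a ^ (p + 1) := by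
  have hq : 0 ≤ q := by linarith
  rw [← Ioc_union_Ioi_eq_Ioi ha.le, setIntegral_union (Ioc_disjoint_Ioi le_rfl) measurableSet_Ioi
      (integrableOn_Ioc_rpow_mul_min_one_div_rpow ha.le hp hq)
      (integrableOn_Ioi_rpow_mul_min_one_div_rpow ha hq hpq),
    integral_Ioc_rpow_mul_min_one_div_rpow ha.le hp hq,
    integral_Ioi_rpow_mul_min_one_div_rpow ha hq hpq, add_mul]

end TruncatedPower

lemma setIntegral_comp_mul_right_mul_le {f w : ℝ → ℝ} {S : Set ℝ} {u : ℝ} (hu : 0 < u)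
    (hf : IntegrableOn f (Ioi 0)) (hf0 : ∀ t, 0 < t → 0 ≤ f t) (hS : MeasurableSet S)
    (hSpos : S ⊆ Ioi 0) (hw0 : ∀ s ∈ S, 0 ≤ w s) (hw1 : ∀ s ∈ S, w s ≤ 1) :
    ∫ s in S, f (s * u) * w s ≤ u⁻¹ * ∫ t in Ioi 0, f t := by
  have hfu0 : ∀ s ∈ Ioi (0 : ℝ), 0 ≤ f (s * u) := fun s hs ↦ hf0 _ (mul_pos hs hu)
  have hfu : IntegrableOn (fun s ↦ f (s * u)) (Ioi 0) := by
    rwa [integrableOn_Ioi_comp_mul_right_iff f 0 hu, zero_mul]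
  calc ∫ s in S, f (s * u) * w s
      ≤ ∫ s in S, f (s * u) := by
        refine integral_mono_of_nonneg ?_ (hfu.mono_set hSpos) ?_ <;>
          filter_upwards [ae_restrict_mem hS] with s hs
        · exact mul_nonneg (hfu0 s (hSpos hs)) (hw0 s hs)
        · exact mul_le_of_le_one_right (hfu0 s (hSpos hs)) (hw1 s hs)
    _ ≤ ∫ s in Ioi 0, f (s * u) :=
        setIntegral_mono_set hfu (ae_restrict_of_forall_mem measurableSet_Ioi hfu0)
          hSpos.eventuallyLE
    _ = u⁻¹ * ∫ t in Ioi 0, f t := by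
        rw [integral_comp_mul_right_Ioi f 0 hu, zero_mul, smul_eq_mul]

lemma locFun_eq_min_one_div_rpow {H c x : ℝ} (hc : 0 ≤ c) (hx : x ≠ 0) :
    locFun H c x = min 1 ((c ^ (1 / (2 * H)) / |x|) ^ (3 : ℝ)) := by
  rw [locFun, if_neg hx, Real.div_rpow (by positivity) (abs_nonneg x), ← Real.rpow_mul hc,
    Real.rpow_neg (abs_nonneg x), one_div_mul_eq_div, div_eq_mul_inv (c ^ _)]

theorem stmt15_general (H c : ℝ) (hH : -1 < 2 * H) (hH0 : H ≠ 0) (hH1 : H < 1) (hc : 0 < c)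
    (x : ℝ) (hx : x ≠ 0) :
    ∫ s in (0 : ℝ)..1, |s * x| ^ (2 * H) * locFun H c (s * x) * (1 - s)
      ≤ (1 / (1 + 2 * H) + 1 / (2 - 2 * H)) * c ^ (1 + 1 / (2 * H)) * |x|⁻¹ := by
  set a := c ^ (1 / (2 * H)) with ha_def
  have ha : 0 < a := Real.rpow_pos_of_pos hc _
  have ha_pow : a ^ (2 * H + 1) = c ^ (1 + 1 / (2 * H)) := by
    rw [ha_def, ← Real.rpow_mul hc.le]
    congr 1
    field_simp
  let f : ℝ → ℝ := fun t ↦ t ^ (2 * H) * min 1 ((a / t) ^ (3 : ℝ))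
  have hf : IntegrableOn f (Ioi 0) :=
    integrableOn_Ioi_zero_rpow_mul_min_one_div_rpow ha hH (by linarith)
  have hf0 : ∀ t, 0 < t → 0 ≤ f t := fun t ht ↦ by positivity
  calc ∫ s in (0 : ℝ)..1, |s * x| ^ (2 * H) * locFun H c (s * x) * (1 - s)
      = ∫ s in Ioc 0 1, f (s * |x|) * (1 - s) := by
        rw [intervalIntegral.integral_of_le zero_le_one]
        refine setIntegral_congr_fun measurableSet_Ioc fun s hs ↦ ?_
        simp only [f, locFun_eq_min_one_div_rpow hc.le (mul_ne_zero hs.1.ne' hx), abs_mul,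
          abs_of_pos hs.1, a]
    _ ≤ |x|⁻¹ * ∫ t in Ioi 0, f t :=
        setIntegral_comp_mul_right_mul_le (abs_pos.mpr hx) hf hf0 measurableSet_Ioc
          Ioc_subset_Ioi_self (fun s hs ↦ sub_nonneg.mpr hs.2)
          (fun s hs ↦ sub_le_self 1 hs.1.le)
    _ = (1 / (1 + 2 * H) + 1 / (2 - 2 * H)) * c ^ (1 + 1 / (2 * H)) * |x|⁻¹ := by
        rw [integral_Ioi_zero_rpow_mul_min_one_div_rpow ha hH (by linarith), ha_pow]
        ring_nf

/-- For `H ∈ (0,1)`, `c > 0` and `x ≠ 0`,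
`∫₀¹ |s x|^{2H} φ_c(s x) (1 - s) ds ≤ (1 + 1/(2 - 2H)) c^{1 + 1/(2H)} |x|⁻¹`. -/
theorem stmt15 (H c : ℝ) (hH0 : 0 < H) (hH1 : H < 1) (hc : 0 < c) (x : ℝ) (hx : x ≠ 0) :
    ∫ s in (0 : ℝ)..1, |s * x| ^ (2 * H) * locFun H c (s * x) * (1 - s)
      ≤ (1 + 1 / (2 - 2 * H)) * c ^ (1 + 1 / (2 * H)) * |x|⁻¹ := by
  refine (stmt15_general H c (by linarith) hH0.ne' hH1 hc x hx).trans ?_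
  gcongr
  exact div_le_one_of_le₀ (by linarith) (by linarith)
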